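/- Let R be a Noetherian ring of finite Krull dimension and M a nonzero finitely generated R-module. Then log_ω(len_R M) = dim M; that is, the degree of the Cantor normal form of the ordinal length of M equals the Krull dimension of M. -/

import Mathlib

open Ordinal

/-- The ordinal length of a Noetherian module: the rank of the zero submodule in the
well-founded order of submodules under reverse inclusion. -/
noncomputable def moduleLength (R M : Type*) [Ring R] [AddCommGroup M] [Module R M]
    [IsNoetherian R M] : Ordinal :=
  IsWellFounded.rank (α := Submodule R M) (· > ·) ⊥

universe u v

/-!
Given an exact sequence `0 → M' → M → M'' → 0`, the map `K ↦ (K ∩ M', image of K in M'')` is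
strictly monotone; conversely, one can climb in `M` first through `M'` and then through `M''`. This
bounds the length of `M` on both sides: `len M'' + len M' ≤ len M ≤ len M' ♯ len M''`, where `♯` is
the natural (Hessenberg) sum.

Ordinals below `ω ^ e` are closed under `♯`, so for the upper bound `len M < ω ^ (dim M + 1)` a
prime filtration reduces to `M = R ⧸ p`. There every proper quotient has smaller dimension, hence by
induction length less than `ω ^ dim M`, and `len M ≤ ω ^ dim M` follows.

For the lower bound, a regular element `x` on `M` gives `len (M ⧸ xM) + len M ≤ len M`, which for
ordinals means `len (M ⧸ xM) * ω ≤ len M`. Each step of a chain of primes in the support of `M`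
provides such an element on a submodule `R ⧸ q` of `M`, and so contributes a factor `ω`.

Finally, neither side changes when `R` is replaced by `R ⧸ Ann M`, which is a Noetherian ring as
soon as `M` is a Noetherian module.
-/

section OrdinalCoheight

variable {α β : Type v}

/-- The ordinal refinement of `Order.coheight`: the rank of an element of a poset satisfying the
ascending chain condition, for the reversed order. The ordinal length of a module is the ordinal
coheight of its zero submodule. -/
noncomputable def ordinalCoheight [Preorder α] [WellFoundedGT α] (a : α) : Ordinal.{v} :=
  IsWellFounded.rank (α := α) (· > ·) a

theorem ordinalCoheight_strictAnti [Preorder α] [WellFoundedGT α] :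
    StrictAnti (ordinalCoheight (α := α)) :=
  WellFoundedGT.rank_strictAnti

theorem ordinalCoheight_le_iff [Preorder α] [WellFoundedGT α] {a : α} {o : Ordinal.{v}} :
    ordinalCoheight a ≤ o ↔ ∀ b > a, ordinalCoheight b < o := by
  rw [ordinalCoheight, IsWellFounded.rank_eq, Ordinal.iSup_le_iff]
  simp only [Order.succ_le_iff, Subtype.forall, ordinalCoheight]

theorem ordinalCoheight_le_of_strictAntiOn [Preorder α] [WellFoundedGT α] {f : α → Ordinal.{v}}
    {a : α} (hf : StrictAntiOn f (Set.Ici a)) : ordinalCoheight a ≤ f a := by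
  induction a using WellFoundedGT.induction with
  | ind a ih =>
    refine ordinalCoheight_le_iff.2 fun b hab ↦ ?_
    exact (ih b hab (hf.mono (Set.Ici_subset_Ici.2 hab.le))).trans_lt
      (hf Set.self_mem_Ici hab.le hab)

theorem ordinalCoheight_apply_top_add_le [PartialOrder α] [OrderTop α] [WellFoundedGT α]
    [PartialOrder β] [WellFoundedGT β] {f : α → β} (hf : StrictMono f) (a : α) :
    ordinalCoheight (f ⊤) + ordinalCoheight a ≤ ordinalCoheight (f a) := by
  induction a using WellFoundedGT.induction with
  | ind a ih =>
    have hbase : ordinalCoheight (f ⊤) ≤ ordinalCoheight (f a) :=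
      ordinalCoheight_strictAnti.antitone (hf.monotone le_top)
    rw [← Ordinal.le_sub_of_le hbase, ordinalCoheight_le_iff]
    exact fun b hab ↦ Ordinal.lt_sub.2 ((ih b hab).trans_lt (ordinalCoheight_strictAnti (hf hab)))

theorem ordinalCoheight_orderIso_apply [PartialOrder α] [OrderTop α] [WellFoundedGT α]
    [PartialOrder β] [OrderTop β] [WellFoundedGT β] (e : α ≃o β) (a : α) :
    ordinalCoheight (e a) = ordinalCoheight a := by
  refine le_antisymm ?_ (le_add_self.trans (ordinalCoheight_apply_top_add_le e.strictMono a))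
  simpa using le_add_self.trans (ordinalCoheight_apply_top_add_le e.symm.strictMono (e a))

end OrdinalCoheight

section NaturalSum

/-- The natural (Hessenberg) sum of ordinals, defined as the least operation which is strictly
increasing in each argument. -/
noncomputable def naturalSum (a b : Ordinal.{u}) : Ordinal.{u} :=
  max (⨆ x : Set.Iio a, Order.succ (naturalSum x.1 b))
    (⨆ y : Set.Iio b, Order.succ (naturalSum a y.1))
termination_by (a, b)
decreasing_by
  · exact Prod.Lex.left _ _ x.2
  · exact Prod.Lex.right _ y.2

local infixl:65 " ♯ " => naturalSum

variable {a b c x y w : Ordinal.{u}} {m n : ℕ}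

theorem naturalSum_le_iff :
    a ♯ b ≤ c ↔ (∀ x < a, x ♯ b < c) ∧ ∀ y < b, a ♯ y < c := by
  rw [naturalSum, max_le_iff, Ordinal.iSup_le_iff, Ordinal.iSup_le_iff]
  simp only [Order.succ_le_iff, Subtype.forall, Set.mem_Iio]

theorem naturalSum_strictMono :
    StrictMono fun p : Ordinal.{u} × Ordinal.{u} ↦ p.1 ♯ p.2 := by
  have hleft {a a' : Ordinal.{u}} (b : Ordinal.{u}) (h : a < a') : a ♯ b < a' ♯ b :=
    (naturalSum_le_iff.1 le_rfl).1 a h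
  have hright (a : Ordinal.{u}) {b b' : Ordinal.{u}} (h : b < b') : a ♯ b < a ♯ b' :=
    (naturalSum_le_iff.1 le_rfl).2 b h
  rintro ⟨a, b⟩ ⟨a', b'⟩ h
  rcases Prod.mk_lt_mk.1 h with ⟨ha, hb⟩ | ⟨ha, hb⟩
  · exact (hleft b ha).trans_le ((StrictMono.monotone fun _ _ ↦ hright a') hb)
  · exact ((StrictMono.monotone fun _ _ ↦ hleft b) ha).trans_lt (hright a' hb)

theorem exists_eq_mul_natCast_add_of_lt (hx : x < w) (ha : a < w * m + x) :
    ∃ k : ℕ, ∃ z < w, a = w * k + z ∧ (k < m ∨ k = m ∧ z < x) := by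
  have hw : w ≠ 0 := (zero_le.trans_lt hx).ne'
  have hdiv : a / w < (m + 1 : ℕ) := by
    rw [← lt_mul_iff_div_lt hw, Nat.cast_succ, mul_add, mul_one]
    exact ha.trans (add_lt_add_right hx _)
  obtain ⟨k, hk⟩ := lt_omega0.1 (hdiv.trans (natCast_lt_omega0 _))
  rw [hk, Nat.cast_lt] at hdiv
  have hak : a = w * k + a % w := by rw [← hk, div_add_mod]
  refine ⟨k, a % w, mod_lt a hw, hak, (Nat.lt_succ_iff_lt_or_eq.1 hdiv).imp_right ?_⟩
  rintro rfl
  rw [hak] at ha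
  exact ⟨rfl, lt_of_add_lt_add_left ha⟩

theorem mul_natCast_add_lt (hx : x < w) (hmn : m < n) : w * m + x < w * n + y :=
  calc w * m + x < w * m + w := by gcongr
    _ = w * (m + 1 : ℕ) := by rw [Nat.cast_succ, mul_add, mul_one]
    _ ≤ w * n := by gcongr; exact hmn
    _ ≤ w * n + y := le_self_add

theorem mul_natCast_add_naturalSum_le (hw : IsPrincipal naturalSum w) (m n : ℕ) {x y : Ordinal.{u}}
    (hx : x < w) (hy : y < w) :
    (w * m + x) ♯ (w * n + y) ≤ w * (m + n : ℕ) + (x ♯ y) := by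
  refine naturalSum_le_iff.2 ⟨fun a ha ↦ ?_, fun b hb ↦ ?_⟩
  · obtain ⟨k, z, hz, rfl, h⟩ := exists_eq_mul_natCast_add_of_lt hx ha
    refine (mul_natCast_add_naturalSum_le hw k n hz hy).trans_lt ?_
    rcases h with hk | ⟨rfl, hzx⟩
    · exact mul_natCast_add_lt (hw hz hy) (by omega)
    · exact add_lt_add_right (naturalSum_strictMono (Prod.mk_lt_mk_of_lt_of_le hzx le_rfl)) _
  · obtain ⟨k, z, hz, rfl, h⟩ := exists_eq_mul_natCast_add_of_lt hy hb
    refine (mul_natCast_add_naturalSum_le hw m k hx hz).trans_lt ?_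
    rcases h with hk | ⟨rfl, hzy⟩
    · exact mul_natCast_add_lt (hw hx hz) (by omega)
    · exact add_lt_add_right (naturalSum_strictMono (Prod.mk_lt_mk_of_le_of_lt le_rfl hzy)) _
termination_by (w * m + x, w * n + y)
decreasing_by
  · exact Prod.Lex.left _ _ ha
  · exact Prod.Lex.right _ hb

theorem isPrincipal_naturalSum_omega0_opow (e : Ordinal.{u}) :
    IsPrincipal naturalSum (ω ^ e) := by
  induction e using WellFoundedLT.induction with
  | ind e ih =>
    intro a b ha hb
    rcases eq_or_ne e 0 with rfl | he
    · rw [opow_zero, Order.lt_one_iff] at ha hb ⊢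
      rw [ha, hb, ← nonpos_iff_eq_zero, naturalSum_le_iff]
      exact ⟨fun x hx ↦ absurd hx not_lt_zero, fun y hy ↦ absurd hy not_lt_zero⟩
    obtain ⟨c, hc, m, hm⟩ := (lt_omega0_opow he).1 ha
    obtain ⟨c', hc', n, hn⟩ := (lt_omega0_opow he).1 hb
    have hk : max c c' < e := max_lt hc hc'
    have hpos : 0 < ω ^ max c c' := opow_pos _ omega0_pos
    have ha' : a ≤ ω ^ max c c' * m + 0 := by
      rw [add_zero]
      exact hm.le.trans (by gcongr; exacts [omega0_pos, le_max_left c c'])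
    have hb' : b ≤ ω ^ max c c' * n + 0 := by
      rw [add_zero]
      exact hn.le.trans (by gcongr; exacts [omega0_pos, le_max_right c c'])
    calc a ♯ b ≤ (ω ^ max c c' * m + 0) ♯ (ω ^ max c c' * n + 0) :=
          naturalSum_strictMono.monotone (Prod.mk_le_mk.2 ⟨ha', hb'⟩)
      _ ≤ ω ^ max c c' * (m + n : ℕ) + (0 ♯ 0) :=
          mul_natCast_add_naturalSum_le (ih _ hk) m n hpos hpos
      _ < ω ^ max c c' * (m + n + 1 : ℕ) + 0 :=
          mul_natCast_add_lt (ih _ hk hpos hpos) (Nat.lt_succ_self _)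
      _ < ω ^ e := by rw [add_zero]; exact opow_mul_lt_opow (natCast_lt_omega0 _) hk

end NaturalSum

section ModuleLength

variable {R : Type u} {M N P : Type v} [Ring R] [AddCommGroup M] [Module R M]
  [AddCommGroup N] [Module R N] [AddCommGroup P] [Module R P]

theorem strictMono_comap_prodMk_map_of_exact {f : N →ₗ[R] M} {g : M →ₗ[R] P}
    (hfg : Function.Exact f g) :
    StrictMono fun K : Submodule R M ↦ (K.comap f, K.map g) := by
  intro K L hKL
  refine lt_of_le_of_ne ⟨Submodule.comap_mono hKL.le, Submodule.map_mono hKL.le⟩ fun heq ↦ ?_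
  obtain ⟨hcomap, hmap⟩ := Prod.mk.inj heq
  refine hKL.ne (eq_of_le_of_inf_le_of_sup_le (z := LinearMap.range f) hKL.le ?_ ?_)
  · rw [inf_comm, inf_comm K, ← Submodule.map_comap_eq, ← Submodule.map_comap_eq, hcomap]
  · rw [← hfg.linearMap_ker_eq, ← Submodule.comap_map_eq, ← Submodule.comap_map_eq, hmap]

variable [IsNoetherian R M] [IsNoetherian R N] [IsNoetherian R P]

theorem moduleLength_quotient (K : Submodule R M) :
    moduleLength R (M ⧸ K) = ordinalCoheight K := by
  change ordinalCoheight (⊥ : Submodule R (M ⧸ K)) = ordinalCoheight K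
  refine le_antisymm ?_ ?_
  · have h := ordinalCoheight_apply_top_add_le (Submodule.comapMkQOrderEmbedding K).strictMono ⊥
    simpa using le_add_self.trans h
  · have hanti : StrictAntiOn (fun L ↦ ordinalCoheight (L.map K.mkQ)) (Set.Ici K) := by
      refine fun L hL L' hL' hLL' ↦ ordinalCoheight_strictAnti ?_
      rw [← (Submodule.comapMkQOrderEmbedding K).lt_iff_lt]
      simpa [Submodule.comap_map_mkQ, sup_eq_right.2 (Set.mem_Ici.1 hL),
        sup_eq_right.2 (Set.mem_Ici.1 hL')] using hLL'
    simpa using ordinalCoheight_le_of_strictAntiOn hanti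

theorem moduleLength_le_iff {o : Ordinal.{v}} :
    moduleLength R M ≤ o ↔ ∀ K : Submodule R M, K ≠ ⊥ → moduleLength R (M ⧸ K) < o := by
  simp only [moduleLength_quotient, ← bot_lt_iff_ne_bot]
  exact ordinalCoheight_le_iff

theorem moduleLength_eq_zero_of_subsingleton [Subsingleton M] : moduleLength R M = 0 :=
  nonpos_iff_eq_zero.1 (moduleLength_le_iff.2 fun K hK ↦ absurd (Subsingleton.elim K ⊥) hK)

theorem moduleLength_quotient_range_add_le {f : N →ₗ[R] M} (hf : Function.Injective f) :
    moduleLength R (M ⧸ LinearMap.range f) + moduleLength R N ≤ moduleLength R M := by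
  have h := ordinalCoheight_apply_top_add_le (Submodule.map_strictMono_of_injective hf) ⊥
  rwa [Submodule.map_bot, Submodule.map_top, ← moduleLength_quotient] at h

theorem moduleLength_le_of_injective {f : N →ₗ[R] M} (hf : Function.Injective f) :
    moduleLength R N ≤ moduleLength R M :=
  le_add_self.trans (moduleLength_quotient_range_add_le hf)

theorem moduleLength_quotient_range_mul_omega0_le {f : M →ₗ[R] M} (hf : Function.Injective f) :
    moduleLength R (M ⧸ LinearMap.range f) * ω ≤ moduleLength R M :=
  add_le_right_iff_mul_omega0_le.1 (moduleLength_quotient_range_add_le hf)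

theorem moduleLength_le_naturalSum_of_exact {f : N →ₗ[R] M} {g : M →ₗ[R] P}
    (hfg : Function.Exact f g) :
    moduleLength R M ≤ naturalSum (moduleLength R N) (moduleLength R P) := by
  have hanti : StrictAnti fun K : Submodule R M ↦
      naturalSum (ordinalCoheight (K.comap f)) (ordinalCoheight (K.map g)) :=
    naturalSum_strictMono.comp_strictAnti
      ((ordinalCoheight_strictAnti.prodMap ordinalCoheight_strictAnti).comp_strictMono
        (strictMono_comap_prodMk_map_of_exact hfg))
  refine (ordinalCoheight_le_of_strictAntiOn (hanti.strictAntiOn _)).trans ?_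
  exact naturalSum_strictMono.monotone (Prod.mk_le_mk.2
    ⟨ordinalCoheight_strictAnti.antitone bot_le, ordinalCoheight_strictAnti.antitone bot_le⟩)

end ModuleLength

section UpperBound

variable {R : Type u} [CommRing R] {M : Type v} [AddCommGroup M] [Module R M]

open scoped Pointwise in
theorem supportDim_quotient_add_one_le_of_notMem_minimalPrimes [Module.Finite R M]
    {N : Submodule R M} {a : R} (haN : a • ⊤ ≤ N)
    (ha : ∀ p ∈ (Module.annihilator R M).minimalPrimes, a ∉ p) :
    Module.supportDim R (M ⧸ N) + 1 ≤ Module.supportDim R M :=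
  calc Module.supportDim R (M ⧸ N) + 1 ≤ Module.supportDim R (QuotSMulTop a M) + 1 := by
        gcongr
        exact Module.supportDim_le_of_surjective _ (Submodule.factor_surjective haN)
    _ ≤ Module.supportDim R M :=
        Module.supportDim_quotSMulTop_succ_le_of_notMem_minimalPrimes ha

open scoped Pointwise in
theorem supportDim_quotient_add_one_le_of_equiv_quotient_prime {p : Ideal R} [p.IsPrime]
    (e : M ≃ₗ[R] R ⧸ p) {N : Submodule R M} (hN : N ≠ ⊥) :
    Module.supportDim R (M ⧸ N) + 1 ≤ Module.supportDim R M := by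
  have : Module.Finite R M := Module.Finite.equiv e.symm
  have hann : Module.annihilator R M = p := by rw [e.annihilator_eq, Ideal.annihilator_quotient]
  let φ : R →ₗ[R] M := e.symm ∘ₗ p.mkQ
  have hφ : Function.Surjective φ := e.symm.surjective.comp p.mkQ_surjective
  obtain ⟨y, hyN, hy0⟩ := N.ne_bot_iff.1 hN
  obtain ⟨a, rfl⟩ := hφ y
  have hap : a ∉ p := fun h ↦ hy0 (by simp [φ, Ideal.Quotient.eq_zero_iff_mem.2 h])
  refine supportDim_quotient_add_one_le_of_notMem_minimalPrimes (a := a) ?_ ?_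
  · intro x hx
    obtain ⟨z, -, rfl⟩ := (Submodule.mem_smul_pointwise_iff_exists _ _ _).1 hx
    obtain ⟨b, rfl⟩ := hφ z
    rw [← map_smul, _root_.smul_eq_mul, mul_comm, ← _root_.smul_eq_mul, map_smul]
    exact N.smul_mem b hyN
  · rw [hann, Ideal.minimalPrimes_eq_subsingleton_self]
    simpa using hap

theorem moduleLength_lt_omega0_opow_of_supportDim_lt [IsNoetherianRing R] [Module.Finite R M]
    {d : ℕ} (hM : Module.supportDim R M < d) : moduleLength R M < ω ^ (d : Ordinal.{v}) := by
  induction d generalizing M with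
  | zero =>
    have : Subsingleton M := by
      rw [← Module.supportDim_eq_bot_iff_subsingleton R, Module.supportDim,
        Order.krullDim_eq_bot_iff, ← not_nonempty_iff, ← Order.krullDim_nonneg_iff]
      exact hM.not_ge
    simp [moduleLength_eq_zero_of_subsingleton]
  | succ d ih =>
    induction ‹Module.Finite R M› using
      IsNoetherianRing.induction_on_isQuotientEquivQuotientPrime R with
    | subsingleton N => simp [moduleLength_eq_zero_of_subsingleton]
    | quotient N p e =>
      have hquot (K : Submodule R N) (hK : K ≠ ⊥) :
          moduleLength R (N ⧸ K) < ω ^ (d : Ordinal.{v}) := by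
        refine ih (lt_of_add_lt_add_right (a := 1) ?_)
        rw [← Nat.cast_succ]
        exact (supportDim_quotient_add_one_le_of_equiv_quotient_prime e hK).trans_lt hM
      exact (moduleLength_le_iff.2 hquot).trans_lt
        ((opow_lt_opow_iff_right one_lt_omega0).2 (Nat.cast_lt.2 d.lt_succ_self))
    | exact N₁ N₂ N₃ f g hf hg hfg h₁ h₃ =>
      have hN₁ := h₁ ((Module.supportDim_le_of_injective f hf).trans_lt hM)
      have hN₃ := h₃ ((Module.supportDim_le_of_surjective g hg).trans_lt hM)
      exact (moduleLength_le_naturalSum_of_exact hfg).trans_lt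
        (isPrincipal_naturalSum_omega0_opow _ hN₁ hN₃)

end UpperBound

section LowerBound

variable {R : Type u} [CommRing R] {M : Type v} [AddCommGroup M] [Module R M]

open scoped Pointwise in
theorem moduleLength_quotSMulTop_mul_omega0_le [IsNoetherian R M] {x : R} (hx : IsSMulRegular M x) :
    moduleLength R (QuotSMulTop x M) * ω ≤ moduleLength R M := by
  have h := moduleLength_quotient_range_mul_omega0_le (f := LinearMap.lsmul R M x) hx
  have hrange : LinearMap.range (LinearMap.lsmul R M x) = x • ⊤ := LinearMap.range_eq_map _
  rwa [hrange] at h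

variable [IsNoetherianRing R] [Module.Finite R M]

theorem exists_submodule_equiv_quotient_prime {p : PrimeSpectrum R} (hp : p ∈ Module.support R M) :
    ∃ q ≤ p, ∃ N : Submodule R M, Nonempty (N ≃ₗ[R] R ⧸ q.asIdeal) := by
  obtain ⟨q, hq, hqp⟩ := Ideal.exists_minimalPrimes_le (Module.mem_support_iff_of_finite.1 hp)
  have hass := Module.associatedPrimes.minimalPrimes_annihilator_subset_associatedPrimes R M hq
  obtain ⟨hprime, f, hf⟩ := (isAssociatedPrime_iff_exists_injective_linearMap q M).1 hass
  exact ⟨⟨q, hprime⟩, hqp, LinearMap.range f, ⟨(LinearEquiv.ofInjective f hf).symm⟩⟩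

theorem omega0_opow_le_moduleLength_of_le_coheight {p : PrimeSpectrum R}
    (hp : p ∈ Module.support R M) {d : ℕ} (hd : d ≤ Order.coheight p) :
    ω ^ (d : Ordinal.{v}) ≤ moduleLength R M := by
  induction d generalizing M p with
  | zero =>
    have : Nontrivial M := Module.nonempty_support_iff.1 ⟨p, hp⟩
    rw [Nat.cast_zero, opow_zero, Order.one_le_iff_pos]
    exact zero_le.trans_lt (ordinalCoheight_strictAnti (bot_lt_top (α := Submodule R M)))
  | succ d ih =>
    obtain ⟨p', hpp', hp'⟩ : ∃ p' > p, d ≤ Order.coheight p' := by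
      by_contra! hcon
      exact (Order.coheight_le_coe_iff.2 hcon).not_gt
        ((Nat.cast_lt.2 d.lt_succ_self).trans_le hd)
    obtain ⟨q, hqp, N, ⟨e⟩⟩ := exists_submodule_equiv_quotient_prime hp
    have hqp' : q < p' := hqp.trans_lt hpp'
    obtain ⟨x, hxp', hxq⟩ := SetLike.exists_of_lt (show q.asIdeal < p'.asIdeal from hqp')
    have hx : IsSMulRegular N x := by
      rw [e.isSMulRegular_congr, ← isSMulRegular_algebraMap_iff (R ⧸ q.asIdeal)]
      exact IsSMulRegular.of_ne_zero (Ideal.Quotient.eq_zero_iff_mem.not.2 hxq)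
    have hsupp : p' ∈ Module.support R (QuotSMulTop x N) := by
      rw [Module.support_quotSMulTop, e.support_eq, Module.support_eq_zeroLocus,
        Ideal.annihilator_quotient]
      exact ⟨hqp'.le, Set.singleton_subset_iff.2 hxp'⟩
    calc ω ^ ((d + 1 : ℕ) : Ordinal.{v}) = ω ^ (d : Ordinal.{v}) * ω := by
          rw [Nat.cast_succ, opow_add, opow_one]
      _ ≤ moduleLength R (QuotSMulTop x N) * ω := by gcongr; exact ih hsupp hp'
      _ ≤ moduleLength R N := moduleLength_quotSMulTop_mul_omega0_le hx
      _ ≤ moduleLength R M := moduleLength_le_of_injective (Submodule.subtype_injective _)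

theorem omega0_opow_le_moduleLength_of_le_supportDim {d : ℕ} (hd : d ≤ Module.supportDim R M) :
    ω ^ (d : Ordinal.{v}) ≤ moduleLength R M := by
  obtain ⟨l, rfl⟩ := Order.le_krullDim_iff.1 hd
  exact omega0_opow_le_moduleLength_of_le_coheight l.head.2
    (Order.length_le_coheight (p := l.map Subtype.val fun _ _ h ↦ h) le_rfl)

end LowerBound

theorem log_moduleLength_eq_of_supportDim_eq {R : Type u} [CommRing R] [IsNoetherianRing R]
    {M : Type v} [AddCommGroup M] [Module R M] [Module.Finite R M] {d : ℕ}
    (hd : Module.supportDim R M = d) :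
    Ordinal.log ω (moduleLength R M) = d := by
  have hlower : ω ^ (d : Ordinal.{v}) ≤ moduleLength R M :=
    omega0_opow_le_moduleLength_of_le_supportDim hd.ge
  have hupper : moduleLength R M < ω ^ ((d + 1 : ℕ) : Ordinal.{v}) :=
    moduleLength_lt_omega0_opow_of_supportDim_lt (hd.trans_lt (by exact_mod_cast d.lt_succ_self))
  rw [Nat.cast_succ] at hupper
  exact (log_eq_iff one_lt_omega0 ((opow_pos _ omega0_pos).trans_le hlower).ne' _).2
    ⟨hlower, hupper⟩

section Reduction

variable (R : Type u) [CommRing R] (M : Type v) [AddCommGroup M] [Module R M] [IsNoetherian R M]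

theorem isNoetherianRing_quotient_annihilator : IsNoetherianRing (R ⧸ Module.annihilator R M) := by
  obtain ⟨s, hs⟩ := IsNoetherian.noetherian (⊤ : Submodule R M)
  let f : R →ₗ[R] s → M := LinearMap.pi fun m ↦ LinearMap.toSpanSingleton R M m
  have hker : LinearMap.ker f = Module.annihilator R M := by
    rw [← Submodule.annihilator_top, ← hs]
    ext r
    simp [f, funext_iff, Submodule.mem_annihilator_span]
  have : IsNoetherian R (R ⧸ Module.annihilator R M) :=
    hker ▸ isNoetherian_of_linearEquiv f.quotKerEquivRange.symm
  exact isNoetherian_of_tower R this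

variable {R M}

theorem moduleLength_eq_of_algebraMap_surjective {S : Type*} [Ring S] [Algebra R S] [Module S M]
    [IsScalarTower R S M] [IsNoetherian S M] (h : Function.Surjective (algebraMap R S)) :
    moduleLength S M = moduleLength R M :=
  (ordinalCoheight_orderIso_apply (Submodule.orderIsoOfAlgebraMapSurjective h) ⊥).symm

end Reduction

theorem log_moduleLength_eq_dim_general
    (R : Type u) [CommRing R] (M : Type v) [AddCommGroup M] [Module R M] [IsNoetherian R M]
    (d : ℕ) (hd : ringKrullDim (R ⧸ Module.annihilator R M) = d) :
    Ordinal.log ω (moduleLength R M) = d := by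
  let S := R ⧸ Module.annihilator R M
  let : Module S M := Module.quotientAnnihilator
  have : IsScalarTower R S M := (Module.isTorsionBySet_annihilator R M).isScalarTower
  have : IsNoetherianRing S := isNoetherianRing_quotient_annihilator R M
  have : Module.Finite S M := Module.Finite.of_restrictScalars_finite R S M
  have hmk : Function.Surjective (algebraMap R S) := Ideal.Quotient.mk_surjective
  have hann : Module.annihilator S M = ⊥ := by
    refine (Submodule.eq_bot_iff _).2 (hmk.forall.2 fun r hr ↦ ?_)
    refine Ideal.Quotient.eq_zero_iff_mem.2 (Module.mem_annihilator.2 fun m ↦ ?_)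
    rw [← algebraMap_smul S r m]
    exact Module.mem_annihilator.1 hr m
  rw [← moduleLength_eq_of_algebraMap_surjective hmk]
  refine log_moduleLength_eq_of_supportDim_eq ?_
  rw [Module.supportDim_eq_ringKrullDim_quotient_annihilator, hann,
    (RingEquiv.quotientBot S).ringKrullDim, hd]

/-- For a nonzero finitely generated module `M` over a finite-dimensional Noetherian ring,
the degree (base-`ω` logarithm) of the ordinal length of `M` equals the Krull dimension of `M`
(the Krull dimension of `R / Ann_R M`). -/
theorem log_moduleLength_eq_dim
    (R : Type u) [CommRing R] [IsNoetherianRing R] (hdim : ringKrullDim R < ⊤)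
    (M : Type v) [AddCommGroup M] [Module R M] [Module.Finite R M] [Nontrivial M]
    (d : ℕ) (hd : ringKrullDim (R ⧸ Module.annihilator R M) = d) :
    Ordinal.log ω (moduleLength R M) = d :=
  log_moduleLength_eq_dim_general R M d hd
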